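/- arXiv:2601.15157 — 2 statements merged into one kernel-verified Lean document; each statement's English description precedes it below -/
import Mathlib

section
/- Let K ≥ 0 and N ≥ 1 be integers. If f : [0,∞) → ℝ is locally integrable and f ∈ ℱ^{K,N}, then 𝒫f ∈ ℱ^{K,N} and ℒf ∈ ℱ^{K,N}. -/
open MeasureTheory Real

/-- The primitive operator `𝒫f(x) = ∫₀ˣ f(s) ds`. -/
noncomputable def Pop (f : ℝ → ℝ) : ℝ → ℝ := fun x => ∫ s in (0:ℝ)..x, f s

/-- The operator `ℒf = f - 𝒫f`. -/
noncomputable def Lop (f : ℝ → ℝ) : ℝ → ℝ := fun x => f x - Pop f x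

/-- `f ∈ ℱ^{K,N}`: there is a polynomial `p` of degree `< K` and `c ≥ 0` with
`|f(ℓ) - p(ℓ)eˡ| ≤ c(ℓ+1)^{N-1} e^{ℓ/2}` for all `ℓ ≥ 0`. -/
def MemFR (K N : ℕ) (f : ℝ → ℝ) : Prop :=
  ∃ p : Polynomial ℝ, p.degree < (K : WithBot ℕ) ∧
    ∃ c : ℝ, 0 ≤ c ∧ ∀ ℓ : ℝ, 0 ≤ ℓ →
      |f ℓ - Polynomial.eval ℓ p * Real.exp ℓ| ≤ c * (ℓ + 1) ^ (N - 1) * Real.exp (ℓ / 2)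

/-!
A polynomial multiple of the exponential has a primitive of the same form: since differentiation
is nilpotent on polynomials of degree `< K`, the equation `q + q' = p` has a solution `q` of degree
`< K`, and `(q eˣ)' = p eˣ`. Thus `𝒫f - q eˣ` is the primitive of the error `f - p eˣ`, up to the
constant `q(0)`. Bounding the polynomial factor of the error by its value at the right endpoint
leaves the integral of `e^{s/2}`, which is at most `2 e^{x/2}`, so the primitive obeys a bound of
the same type.
-/

section Polynomial

open Polynomial

lemma degree_derivative_lt_of_degree_lt_succ {R : Type*} [Semiring R] {n : ℕ} {p : R[X]}
    (hp : p.degree < (n + 1 : ℕ)) : (derivative p).degree < n := by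
  rw [degree_lt_iff_coeff_zero] at hp ⊢
  intro m hm
  rw [coeff_derivative, hp (m + 1) (by lia), zero_mul]

lemma exists_degree_lt_smul_add_derivative_eq {k : Type*} [Field k] {a : k} (ha : a ≠ 0) {n : ℕ}
    {p : k[X]} (hp : p.degree < n) : ∃ q : k[X], q.degree < n ∧ a • q + derivative q = p := by
  induction n generalizing p with
  | zero =>
    obtain rfl : p = 0 := by simpa using hp
    exact ⟨0, by simp, by simp⟩
  | succ n ih =>
    obtain ⟨r, hr, hrp⟩ := ih (degree_derivative_lt_of_degree_lt_succ hp)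
    have hr' : r.degree < (n + 1 : ℕ) := hr.trans (by exact_mod_cast n.lt_succ_self)
    refine ⟨a⁻¹ • (p - r), ?_, ?_⟩
    · exact (degree_smul_le _ _).trans_lt ((degree_sub_le p r).trans_lt (max_lt hp hr'))
    · rw [derivative_smul, derivative_sub, ← hrp, add_sub_cancel_right, smul_inv_smul₀ ha,
        inv_smul_smul₀ ha, sub_add_cancel]

lemma hasDerivAt_eval_mul_exp (q : ℝ[X]) (a x : ℝ) :
    HasDerivAt (fun s ↦ q.eval s * exp (a * s))
      ((a • q + derivative q).eval x * exp (a * x)) x := by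
  have hexp : HasDerivAt (fun s ↦ exp (a * s)) (exp (a * x) * a) x := by
    simpa using ((hasDerivAt_id x).const_mul a).exp
  refine ((q.hasDerivAt x).mul hexp).congr_deriv ?_
  simp only [eval_add, eval_smul, smul_eq_mul]
  ring

lemma integral_eval_mul_exp (q : ℝ[X]) (a x y : ℝ) :
    ∫ s in x..y, (a • q + derivative q).eval s * exp (a * s) =
      q.eval y * exp (a * y) - q.eval x * exp (a * x) :=
  intervalIntegral.integral_eq_sub_of_hasDerivAt (fun s _ ↦ hasDerivAt_eval_mul_exp q a s)
    (Continuous.intervalIntegrable (by fun_prop) _ _)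

end Polynomial

lemma integral_exp_mul_le {a : ℝ} (ha : 0 < a) (x y : ℝ) :
    ∫ s in x..y, exp (a * s) ≤ exp (a * y) / a := by
  rw [intervalIntegral.integral_comp_mul_left _ ha.ne', integral_exp, smul_eq_mul,
    inv_mul_eq_div]
  gcongr
  exact sub_le_self _ (exp_pos _).le

lemma norm_integral_le_of_norm_le_mul_exp {E : Type*} [NormedAddCommGroup E] [NormedSpace ℝ E]
    {g : ℝ → E} {w : ℝ → ℝ} {a x y : ℝ} (ha : 0 < a) (hxy : x ≤ y)
    (hw : MonotoneOn w (Set.Icc x y)) (hg : ∀ s ∈ Set.Icc x y, ‖g s‖ ≤ w s * exp (a * s)) :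
    ‖∫ s in x..y, g s‖ ≤ w y * (exp (a * y) / a) := by
  have hy : y ∈ Set.Icc x y := Set.right_mem_Icc.2 hxy
  have hwy : 0 ≤ w y :=
    nonneg_of_mul_nonneg_left ((norm_nonneg _).trans (hg y hy)) (exp_pos _)
  have hgy : ∀ s ∈ Set.Ioc x y, ‖g s‖ ≤ w y * exp (a * s) := fun s hs ↦ by
    have hs' : s ∈ Set.Icc x y := Set.Ioc_subset_Icc_self hs
    exact (hg s hs').trans (by gcongr; exact hw hs' hy hs.2)
  calc ‖∫ s in x..y, g s‖
    _ ≤ ∫ s in x..y, w y * exp (a * s) :=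
      intervalIntegral.norm_integral_le_of_norm_le hxy (.of_forall hgy)
        (Continuous.intervalIntegrable (by fun_prop) _ _)
    _ = w y * ∫ s in x..y, exp (a * s) := intervalIntegral.integral_const_mul _ _
    _ ≤ w y * (exp (a * y) / a) := by gcongr; exact integral_exp_mul_le ha x y

lemma MemFR.sub {K N : ℕ} {f g : ℝ → ℝ} (hf : MemFR K N f) (hg : MemFR K N g) :
    MemFR K N (fun x ↦ f x - g x) := by
  obtain ⟨p, hp, c, hc, hfp⟩ := hf
  obtain ⟨q, hq, d, hd, hgq⟩ := hg
  refine ⟨p - q, (Polynomial.degree_sub_le p q).trans_lt (max_lt hp hq), c + d,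
    add_nonneg hc hd, fun x hx ↦ ?_⟩
  calc |f x - g x - (p - q).eval x * exp x|
    _ = |(f x - p.eval x * exp x) - (g x - q.eval x * exp x)| := by
      rw [Polynomial.eval_sub]; ring_nf
    _ ≤ |f x - p.eval x * exp x| + |g x - q.eval x * exp x| := abs_sub _ _
    _ ≤ c * (x + 1) ^ (N - 1) * exp (x / 2) + d * (x + 1) ^ (N - 1) * exp (x / 2) :=
      add_le_add (hfp x hx) (hgq x hx)
    _ = (c + d) * (x + 1) ^ (N - 1) * exp (x / 2) := by ring

lemma pop_sub_eval_mul_exp {f : ℝ → ℝ} {x : ℝ} (hf : IntervalIntegrable f volume 0 x)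
    (q : Polynomial ℝ) :
    Pop f x - q.eval x * exp x =
      Pop (fun s ↦ f s - (q + q.derivative).eval s * exp s) x - q.eval 0 := by
  have hint := integral_eval_mul_exp q 1 0 x
  simp only [one_smul, one_mul, exp_zero, mul_one] at hint
  unfold Pop
  rw [intervalIntegral.integral_sub hf (Continuous.intervalIntegrable (by fun_prop) _ _), hint]
  ring

lemma abs_pop_le_of_abs_le_mul_exp_half {g : ℝ → ℝ} {c : ℝ} {n : ℕ}
    (hg : ∀ s, 0 ≤ s → |g s| ≤ c * (s + 1) ^ n * exp (s / 2)) {x : ℝ} (hx : 0 ≤ x) :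
    |Pop g x| ≤ 2 * c * (x + 1) ^ n * exp (x / 2) := by
  have hc : 0 ≤ c := by simpa using (abs_nonneg _).trans (hg 0 le_rfl)
  have hmono : MonotoneOn (fun s : ℝ ↦ c * (s + 1) ^ n) (Set.Icc 0 x) := fun s hs t _ hst ↦ by
    have : 0 ≤ s + 1 := by linarith [hs.1]
    dsimp only
    gcongr
  have hbound := norm_integral_le_of_norm_le_mul_exp one_half_pos hx hmono (g := g)
    fun s hs ↦ by simpa only [norm_eq_abs, one_div_mul_eq_div] using hg s hs.1
  calc |Pop g x|
    _ ≤ c * (x + 1) ^ n * (exp (1 / 2 * x) / (1 / 2)) := hbound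
    _ = 2 * c * (x + 1) ^ n * exp (x / 2) := by rw [one_div_mul_eq_div]; ring

lemma MemFR.pop {K N : ℕ} {f : ℝ → ℝ} (hf : LocallyIntegrableOn f (Set.Ici 0))
    (h : MemFR K N f) : MemFR K N (Pop f) := by
  obtain ⟨p, hp, c, hc, hfp⟩ := h
  obtain ⟨q, hq, hqp⟩ := exists_degree_lt_smul_add_derivative_eq one_ne_zero hp
  obtain rfl : q + q.derivative = p := by rwa [one_smul] at hqp
  refine ⟨q, hq, 2 * c + |q.eval 0|, by positivity, fun x hx ↦ ?_⟩
  have hfx : IntervalIntegrable f volume 0 x :=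
    (intervalIntegrable_iff_integrableOn_Icc_of_le hx).2
      (hf.integrableOn_compact_subset Set.Icc_subset_Ici_self isCompact_Icc)
  have hweight : 1 ≤ (x + 1) ^ (N - 1) * exp (x / 2) :=
    one_le_mul_of_one_le_of_one_le (one_le_pow₀ (by linarith)) (one_le_exp (by positivity))
  calc |Pop f x - q.eval x * exp x|
    _ = |Pop (fun s ↦ f s - (q + q.derivative).eval s * exp s) x - q.eval 0| := by
      rw [pop_sub_eval_mul_exp hfx]
    _ ≤ |Pop (fun s ↦ f s - (q + q.derivative).eval s * exp s) x| + |q.eval 0| := abs_sub _ _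
    _ ≤ 2 * c * (x + 1) ^ (N - 1) * exp (x / 2) +
        |q.eval 0| * ((x + 1) ^ (N - 1) * exp (x / 2)) :=
      add_le_add (abs_pop_le_of_abs_le_mul_exp_half hfp hx)
        (le_mul_of_one_le_right (abs_nonneg _) hweight)
    _ = (2 * c + |q.eval 0|) * (x + 1) ^ (N - 1) * exp (x / 2) := by ring

lemma MemFR.lop {K N : ℕ} {f : ℝ → ℝ} (hf : LocallyIntegrableOn f (Set.Ici 0))
    (h : MemFR K N f) : MemFR K N (Lop f) :=
  h.sub (h.pop hf)

/-- The operators `𝒫` and `ℒ` preserve the class `ℱ^{K,N}`. -/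
theorem Pop_Lop_preserve_FR (K N : ℕ) (hN : 1 ≤ N) (f : ℝ → ℝ)
    (hf : LocallyIntegrableOn f (Set.Ici (0:ℝ))) (h : MemFR K N f) :
    MemFR K N (Pop f) ∧ MemFR K N (Lop f) :=
  ⟨h.pop hf, h.lop hf⟩
end

section
/- Let K ≥ 0 and N ≥ 1 be integers. If f : [0,∞) → ℝ is locally integrable and f ∈ ℱ_w^{K,N}, then 𝒫f ∈ ℱ_w^{K,N} and ℒf ∈ ℱ_w^{K,N}; in particular, if f ∈ ℛ_w^N then 𝒫f ∈ ℛ_w^N and ℒf ∈ ℛ_w^N. -/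
open MeasureTheory Real

/-- `f ∈ ℱ_w^{K,N}`: there is a polynomial `p` of degree `< K` and `c ≥ 0` with
`∫₀^ℓ |f(s) - p(s)eˢ| ds ≤ c(ℓ+1)^{N-1} e^{ℓ/2}` for all `ℓ ≥ 0`;
`ℛ_w^N := ℱ_w^{0,N}` (for `K = 0` the degree condition forces `p = 0`). -/
def MemFRw (K N : ℕ) (f : ℝ → ℝ) : Prop :=
  ∃ p : Polynomial ℝ, p.degree < (K : WithBot ℕ) ∧
    ∃ c : ℝ, 0 ≤ c ∧ ∀ ℓ : ℝ, 0 ≤ ℓ →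
      (∫ s in (0:ℝ)..ℓ, |f s - Polynomial.eval s p * Real.exp s|) ≤
        c * (ℓ + 1) ^ (N - 1) * Real.exp (ℓ / 2)

/-!
Write `f = p eˢ + g` with `g` in the remainder class `ℛ_w^N`. Choosing `q` with `q + q' = p` and
`deg q ≤ deg p` gives `𝒫f = q eˣ + (𝒫g - q(0))`. Since `|𝒫g(x)| ≤ ∫₀ˣ |g|`, the function
`𝒫g - q(0)` is *pointwise* at most a constant times `(x+1)^{N-1} e^{x/2}`, and integrating this
bound loses no power of `x + 1` because `∫₀^ℓ e^{s/2} ds ≤ 2 e^{ℓ/2}`. Finally, `ℒf = f - 𝒫f` is a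
difference of locally integrable elements of `ℱ_w^{K,N}`.
-/

theorem exists_add_derivative_eq {R : Type*} [Ring R] (p : Polynomial R) :
    ∃ q : Polynomial R, q.degree ≤ p.degree ∧ q + q.derivative = p := by
  induction p using Polynomial.degree_lt_wf.induction with
  | _ p ih =>
    obtain rfl | hp := eq_or_ne p 0
    · exact ⟨0, le_rfl, by simp⟩
    have hlt : p.derivative.degree < p.degree := Polynomial.degree_derivative_lt hp
    obtain ⟨r, hdeg, hr⟩ := ih p.derivative hlt
    refine ⟨p - r, (Polynomial.degree_sub_le p r).trans (max_le le_rfl (hdeg.trans hlt.le)), ?_⟩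
    rw [Polynomial.derivative_sub, ← hr]
    abel

theorem intervalIntegrable_eval_mul_exp (p : Polynomial ℝ) (a b : ℝ) :
    IntervalIntegrable (fun s => p.eval s * exp s) volume a b :=
  (p.continuous.mul continuous_exp).intervalIntegrable a b

theorem integral_eval_add_derivative_mul_exp (q : Polynomial ℝ) (a b : ℝ) :
    ∫ s in a..b, (q + q.derivative).eval s * exp s = q.eval b * exp b - q.eval a * exp a := by
  refine intervalIntegral.integral_eq_sub_of_hasDerivAt (f := fun s => q.eval s * exp s)
    (fun s _ => ?_) (intervalIntegrable_eval_mul_exp _ a b)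
  refine ((q.hasDerivAt s).mul (hasDerivAt_exp s)).congr_deriv ?_
  rw [Polynomial.eval_add]
  ring

theorem integral_exp_div_le {τ : ℝ} (hτ : 0 < τ) (a b : ℝ) :
    ∫ s in a..b, exp (s / τ) ≤ τ * exp (b / τ) := by
  rw [intervalIntegral.integral_comp_div exp hτ.ne', integral_exp, smul_eq_mul]
  gcongr
  exact sub_le_self _ (exp_nonneg _)

theorem norm_integral_le_of_norm_le_mul_exp_div {E : Type*} [NormedAddCommGroup E]
    [NormedSpace ℝ E] {g : ℝ → E} {a b C τ : ℝ} (hab : a ≤ b) (hC : 0 ≤ C) (hτ : 0 < τ)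
    (hg : ∀ s ∈ Set.Ioc a b, ‖g s‖ ≤ C * exp (s / τ)) :
    ‖∫ s in a..b, g s‖ ≤ C * (τ * exp (b / τ)) :=
  calc ‖∫ s in a..b, g s‖
      ≤ ∫ s in a..b, C * exp (s / τ) :=
        intervalIntegral.norm_integral_le_of_norm_le hab (.of_forall hg)
          (Continuous.intervalIntegrable (by fun_prop) a b)
    _ = C * ∫ s in a..b, exp (s / τ) := intervalIntegral.integral_const_mul _ _
    _ ≤ C * (τ * exp (b / τ)) := by gcongr; exact integral_exp_div_le hτ a b

theorem intervalIntegrable_Pop {f : ℝ → ℝ} {ℓ : ℝ} (hf : IntervalIntegrable f volume 0 ℓ) :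
    IntervalIntegrable (Pop f) volume 0 ℓ :=
  (intervalIntegral.continuousOn_primitive_interval' hf Set.left_mem_uIcc).intervalIntegrable

theorem memFRw_zero_iff {N : ℕ} {g : ℝ → ℝ} :
    MemFRw 0 N g ↔ ∃ c : ℝ, 0 ≤ c ∧ ∀ ℓ : ℝ, 0 ≤ ℓ →
      ∫ s in 0..ℓ, |g s| ≤ c * (ℓ + 1) ^ (N - 1) * exp (ℓ / 2) := by
  simp [MemFRw, Nat.WithBot.lt_zero_iff]

theorem memFRw_iff_exists_sub {K N : ℕ} {f : ℝ → ℝ} :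
    MemFRw K N f ↔ ∃ p : Polynomial ℝ, p.degree < (K : WithBot ℕ) ∧
      MemFRw 0 N (fun s => f s - p.eval s * exp s) := by
  simp only [memFRw_zero_iff]
  rfl

theorem memFRw_zero_of_abs_le {N : ℕ} {g : ℝ → ℝ} {c : ℝ} (hc : 0 ≤ c)
    (hg : ∀ x : ℝ, 0 ≤ x → |g x| ≤ c * (x + 1) ^ (N - 1) * exp (x / 2)) : MemFRw 0 N g := by
  refine memFRw_zero_iff.2 ⟨2 * c, by positivity, fun ℓ hℓ => ?_⟩
  have hg_le : ∀ s ∈ Set.Ioc 0 ℓ, ‖|g s|‖ ≤ c * (ℓ + 1) ^ (N - 1) * exp (s / 2) := by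
    rintro s ⟨hs, hsℓ⟩
    rw [norm_eq_abs, abs_abs]
    refine (hg s hs.le).trans ?_
    gcongr
  calc ∫ s in 0..ℓ, |g s|
      ≤ ‖∫ s in 0..ℓ, |g s|‖ := le_norm_self _
    _ ≤ c * (ℓ + 1) ^ (N - 1) * (2 * exp (ℓ / 2)) :=
        norm_integral_le_of_norm_le_mul_exp_div hℓ (by positivity) two_pos hg_le
    _ = 2 * c * (ℓ + 1) ^ (N - 1) * exp (ℓ / 2) := by ring

namespace MemFRw

variable {K N : ℕ} {f g : ℝ → ℝ}

theorem of_eq_Pop_sub_const (hg : MemFRw 0 N g) (a : ℝ)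
    (hf : ∀ x : ℝ, 0 ≤ x → f x = Pop g x - a) : MemFRw 0 N f := by
  obtain ⟨c, hc, hgc⟩ := memFRw_zero_iff.1 hg
  refine memFRw_zero_of_abs_le (c := c + |a|) (by positivity) fun x hx => ?_
  have h_weight : 1 ≤ (x + 1) ^ (N - 1) * exp (x / 2) :=
    one_le_mul_of_one_le_of_one_le (one_le_pow₀ (by linarith)) (one_le_exp (by positivity))
  calc |f x| = |Pop g x - a| := by rw [hf x hx]
    _ ≤ |Pop g x| + |a| := abs_sub _ _
    _ ≤ (∫ s in 0..x, |g s|) + |a| := by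
        gcongr
        exact intervalIntegral.abs_integral_le_integral_abs hx
    _ ≤ c * (x + 1) ^ (N - 1) * exp (x / 2) + |a| * ((x + 1) ^ (N - 1) * exp (x / 2)) :=
        add_le_add (hgc x hx) (le_mul_of_one_le_right (abs_nonneg a) h_weight)
    _ = (c + |a|) * (x + 1) ^ (N - 1) * exp (x / 2) := by ring

theorem pop (hf_int : ∀ ℓ : ℝ, 0 ≤ ℓ → IntervalIntegrable f volume 0 ℓ) (hf : MemFRw K N f) :
    MemFRw K N (Pop f) := by
  obtain ⟨p, hp, hfp⟩ := memFRw_iff_exists_sub.1 hf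
  obtain ⟨q, hqp, rfl⟩ := exists_add_derivative_eq p
  refine memFRw_iff_exists_sub.2 ⟨q, hqp.trans_lt hp, hfp.of_eq_Pop_sub_const (q.eval 0) ?_⟩
  intro x hx
  simp only [Pop]
  rw [intervalIntegral.integral_sub (hf_int x hx) (intervalIntegrable_eval_mul_exp _ 0 x),
    integral_eval_add_derivative_mul_exp, exp_zero]
  ring

theorem remainder_sub (hf_int : ∀ ℓ : ℝ, 0 ≤ ℓ → IntervalIntegrable f volume 0 ℓ)
    (hg_int : ∀ ℓ : ℝ, 0 ≤ ℓ → IntervalIntegrable g volume 0 ℓ)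
    (hf : MemFRw 0 N f) (hg : MemFRw 0 N g) : MemFRw 0 N (fun s => f s - g s) := by
  obtain ⟨c, hc, hfc⟩ := memFRw_zero_iff.1 hf
  obtain ⟨d, hd, hgd⟩ := memFRw_zero_iff.1 hg
  refine memFRw_zero_iff.2 ⟨c + d, by positivity, fun ℓ hℓ => ?_⟩
  have hfℓ := hf_int ℓ hℓ
  have hgℓ := hg_int ℓ hℓ
  calc ∫ s in 0..ℓ, |f s - g s|
      ≤ ∫ s in 0..ℓ, (|f s| + |g s|) :=
        intervalIntegral.integral_mono_on hℓ (hfℓ.sub hgℓ).abs (hfℓ.abs.add hgℓ.abs)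
          fun s _ => abs_sub (f s) (g s)
    _ = (∫ s in 0..ℓ, |f s|) + ∫ s in 0..ℓ, |g s| :=
        intervalIntegral.integral_add hfℓ.abs hgℓ.abs
    _ ≤ c * (ℓ + 1) ^ (N - 1) * exp (ℓ / 2) + d * (ℓ + 1) ^ (N - 1) * exp (ℓ / 2) :=
        add_le_add (hfc ℓ hℓ) (hgd ℓ hℓ)
    _ = (c + d) * (ℓ + 1) ^ (N - 1) * exp (ℓ / 2) := by ring

theorem sub (hf_int : ∀ ℓ : ℝ, 0 ≤ ℓ → IntervalIntegrable f volume 0 ℓ)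
    (hg_int : ∀ ℓ : ℝ, 0 ≤ ℓ → IntervalIntegrable g volume 0 ℓ)
    (hf : MemFRw K N f) (hg : MemFRw K N g) : MemFRw K N (fun s => f s - g s) := by
  obtain ⟨p, hp, hfp⟩ := memFRw_iff_exists_sub.1 hf
  obtain ⟨q, hq, hgq⟩ := memFRw_iff_exists_sub.1 hg
  refine memFRw_iff_exists_sub.2
    ⟨p - q, (Polynomial.degree_sub_le p q).trans_lt (max_lt hp hq), ?_⟩
  convert remainder_sub (fun ℓ hℓ => (hf_int ℓ hℓ).sub (intervalIntegrable_eval_mul_exp p 0 ℓ))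
    (fun ℓ hℓ => (hg_int ℓ hℓ).sub (intervalIntegrable_eval_mul_exp q 0 ℓ)) hfp hgq using 2
  rw [Polynomial.eval_sub]
  ring

theorem lop (hf_int : ∀ ℓ : ℝ, 0 ≤ ℓ → IntervalIntegrable f volume 0 ℓ) (hf : MemFRw K N f) :
    MemFRw K N (Lop f) :=
  hf.sub hf_int (fun ℓ hℓ => intervalIntegrable_Pop (hf_int ℓ hℓ)) (hf.pop hf_int)

end MemFRw

/-- The operators `𝒫` and `ℒ` preserve the weak class `ℱ_w^{K,N}`; in particular
(taking `K = 0`) they preserve the weak remainder class `ℛ_w^N = ℱ_w^{0,N}`. -/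
theorem Pop_Lop_preserve_FRw (K N : ℕ) (hN : 1 ≤ N) (f : ℝ → ℝ)
    (hf : LocallyIntegrableOn f (Set.Ici (0:ℝ))) (h : MemFRw K N f) :
    (MemFRw K N (Pop f) ∧ MemFRw K N (Lop f)) ∧
      (MemFRw 0 N f → MemFRw 0 N (Pop f) ∧ MemFRw 0 N (Lop f)) := by
  have hf_int (ℓ : ℝ) (hℓ : 0 ≤ ℓ) : IntervalIntegrable f volume 0 ℓ :=
    (intervalIntegrable_iff_integrableOn_Icc_of_le hℓ).2
      (hf.integrableOn_compact_subset Set.Icc_subset_Ici_self isCompact_Icc)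
  exact ⟨⟨h.pop hf_int, h.lop hf_int⟩, fun h₀ => ⟨h₀.pop hf_int, h₀.lop hf_int⟩⟩
end
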